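/- Let ρ = Σᵢ qᵢ ρᵢ be a convex combination of three-qubit density matrices ρᵢ with qᵢ > 0 and Σᵢ qᵢ = 1, let X₀, X₁, Y₀, Y₁ be Hermitian qubit observables with eigenvalues ±1, and Z₀ = σx, Z₁ = σy. Suppose the four conditioning events in CP have positive probability for ρ and CP(ρ) = 4. Then for every i, the unnormalized conditional states of the component ρᵢ satisfy σ^{C,(i)}_{1,1|X₀,Y₀} = Tr[σ^{C,(i)}_{1,1|X₀,Y₀}]·(I+σx)/2, σ^{C,(i)}_{0,1|X₁,Y₁} = Tr[σ^{C,(i)}_{0,1|X₁,Y₁}]·(I+σx)/2, σ^{C,(i)}_{0,1|X₀,Y₁} = Tr[σ^{C,(i)}_{0,1|X₀,Y₁}]·(I+σy)/2, and σ^{C,(i)}_{0,1|X₁,Y₀} = Tr[σ^{C,(i)}_{0,1|X₁,Y₀}]·(I+σy)/2; in particular, every component ρᵢ for which the four conditioning events have positive probability also attains CP(ρᵢ) = 4 with the same measurement settings. -/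

import Mathlib

open Matrix Complex
open scoped Matrix Kronecker ComplexOrder

noncomputable section
namespace Paper

/-- Pauli X. -/
def sx : Matrix (Fin 2) (Fin 2) ℂ := !![0, 1; 1, 0]
/-- Pauli Y. -/
def sy : Matrix (Fin 2) (Fin 2) ℂ := !![0, -Complex.I; Complex.I, 0]
/-- Pauli Z. -/
def sz : Matrix (Fin 2) (Fin 2) ℂ := !![1, 0; 0, -1]

/-- Projector onto outcome `a ∈ {0,1}` of a dichotomic observable `O`:
`Π₀ = (I+O)/2`, `Π₁ = (I−O)/2`. -/
def Proj {d : ℕ} (a : Fin 2) (O : Matrix (Fin d) (Fin d) ℂ) : Matrix (Fin d) (Fin d) ℂ :=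
  (2 : ℂ)⁻¹ • (1 + if a = 0 then O else -O)

/-- Outer product `|ψ⟩⟨ψ|`. -/
def outer {n : Type*} (ψ : n → ℂ) : Matrix n n ℂ :=
  Matrix.of fun i j => ψ i * star (ψ j)

/-- `ψ` is a unit vector. -/
def UnitVec {n : Type*} [Fintype n] (ψ : n → ℂ) : Prop := ∑ i, star (ψ i) * ψ i = 1

/-- Hermitian observable with eigenvalues `±1`. -/
def Dichotomic {d : ℕ} (O : Matrix (Fin d) (Fin d) ℂ) : Prop := O.IsHermitian ∧ O * O = 1

/-- Partial trace over the first two tensor factors. -/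
def trAB {dA dB : ℕ} (M : Matrix (Fin dA × Fin dB × Fin 2) (Fin dA × Fin dB × Fin 2) ℂ) :
    Matrix (Fin 2) (Fin 2) ℂ :=
  Matrix.of fun i j => ∑ k : Fin dA, ∑ l : Fin dB, M (k, l, i) (k, l, j)

/-- Unnormalized conditional state on Charlie's qubit:
`σ^C_{a,b|X,Y} = Tr_{AB}[(Π_{a|X} ⊗ Π_{b|Y} ⊗ I₂) ρ]`. -/
def condState {dA dB : ℕ} (ρ : Matrix (Fin dA × Fin dB × Fin 2) (Fin dA × Fin dB × Fin 2) ℂ)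
    (X : Matrix (Fin dA) (Fin dA) ℂ) (Y : Matrix (Fin dB) (Fin dB) ℂ) (a b : Fin 2) :
    Matrix (Fin 2) (Fin 2) ℂ :=
  trAB ((Proj a X ⊗ₖ (Proj b Y ⊗ₖ (1 : Matrix (Fin 2) (Fin 2) ℂ))) * ρ)

/-- Conditional probability `P(c_Z | ·) = Tr[Π_{c|Z} σ] / Tr[σ]`. -/
def condProb (Z σ : Matrix (Fin 2) (Fin 2) ℂ) (c : Fin 2) : ℝ :=
  ((Proj c Z * σ).trace).re / (σ.trace).re

/-- The fine-grained steering expression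
`CP = P(0_{Z₀}|1_{X₀}1_{Y₀}) + P(0_{Z₀}|0_{X₁}1_{Y₁}) + P(0_{Z₁}|0_{X₀}1_{Y₁}) + P(0_{Z₁}|0_{X₁}1_{Y₀})`
with `Z₀ = σx`, `Z₁ = σy`. -/
def CP {dA dB : ℕ} (ρ : Matrix (Fin dA × Fin dB × Fin 2) (Fin dA × Fin dB × Fin 2) ℂ)
    (X0 X1 : Matrix (Fin dA) (Fin dA) ℂ) (Y0 Y1 : Matrix (Fin dB) (Fin dB) ℂ) : ℝ :=
  condProb sx (condState ρ X0 Y0 1 1) 0 + condProb sx (condState ρ X1 Y1 0 1) 0 +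
  condProb sy (condState ρ X0 Y1 0 1) 0 + condProb sy (condState ρ X1 Y0 0 1) 0

/-- The four conditioning events in `CP` have positive probability. -/
def PosEvents {dA dB : ℕ} (ρ : Matrix (Fin dA × Fin dB × Fin 2) (Fin dA × Fin dB × Fin 2) ℂ)
    (X0 X1 : Matrix (Fin dA) (Fin dA) ℂ) (Y0 Y1 : Matrix (Fin dB) (Fin dB) ℂ) : Prop :=
  0 < ((condState ρ X0 Y0 1 1).trace).re ∧ 0 < ((condState ρ X1 Y1 0 1).trace).re ∧
  0 < ((condState ρ X0 Y1 0 1).trace).re ∧ 0 < ((condState ρ X1 Y0 0 1).trace).re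

/-- Product across the bipartition `A|BC`. -/
def BisepA {dA dB : ℕ} (ψ : Fin dA × Fin dB × Fin 2 → ℂ) : Prop :=
  ∃ (u : Fin dA → ℂ) (v : Fin dB × Fin 2 → ℂ), ∀ i j k, ψ (i, j, k) = u i * v (j, k)

/-- Product across the bipartition `B|AC`. -/
def BisepB {dA dB : ℕ} (ψ : Fin dA × Fin dB × Fin 2 → ℂ) : Prop :=
  ∃ (u : Fin dB → ℂ) (v : Fin dA × Fin 2 → ℂ), ∀ i j k, ψ (i, j, k) = u j * v (i, k)

/-- Product across the bipartition `C|AB`. -/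
def BisepC {dA dB : ℕ} (ψ : Fin dA × Fin dB × Fin 2 → ℂ) : Prop :=
  ∃ (u : Fin 2 → ℂ) (v : Fin dA × Fin dB → ℂ), ∀ i j k, ψ (i, j, k) = v (i, j) * u k

/-- Genuine multipartite entanglement: not a product across any bipartition. -/
def GenEnt {dA dB : ℕ} (ψ : Fin dA × Fin dB × Fin 2 → ℂ) : Prop :=
  ¬ BisepA ψ ∧ ¬ BisepB ψ ∧ ¬ BisepC ψ

/-! For every conditional state `σ` of Charlie's qubit, `P(0_Z | ·) = 1 - P(1_Z | ·)`, so `CP = 4`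
forces all four probabilities `P(1_Z | ·)`, hence the numerators `Tr[Π_{1|Z} σ]`, to vanish. These
numerators are nonnegative and linear in `ρ`, so if they vanish for a mixture with positive weights
they vanish for every component. Finally, `Tr[Π_{1|Z} σ] = 0` with `σ ≥ 0` puts the range of `σ`
inside that of the rank-one projector `Π_{0|Z}`, i.e. `σ = Tr[σ] Π_{0|Z}`. -/

section PosSemidefTrace

variable {n : Type*} [Fintype n]

lemma trace_conjTranspose_mul_self_mul_conjTranspose_mul_self (S T : Matrix n n ℂ) :
    (Sᴴ * S * (Tᴴ * T)).trace = ((S * Tᴴ)ᴴ * (S * Tᴴ)).trace := by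
  rw [← Matrix.mul_assoc, trace_mul_comm, conjTranspose_mul, conjTranspose_conjTranspose]
  simp only [Matrix.mul_assoc]

variable {A B : Matrix n n ℂ}

open scoped MatrixOrder in
lemma exists_eq_conjTranspose_mul_self (hA : A.PosSemidef) : ∃ S : Matrix n n ℂ, A = Sᴴ * S := by
  classical
  exact CStarAlgebra.nonneg_iff_eq_star_mul_self.mp hA.nonneg

lemma trace_mul_nonneg (hA : A.PosSemidef) (hB : B.PosSemidef) : 0 ≤ (A * B).trace := by
  obtain ⟨S, rfl⟩ := exists_eq_conjTranspose_mul_self hA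
  obtain ⟨T, rfl⟩ := exists_eq_conjTranspose_mul_self hB
  rw [trace_conjTranspose_mul_self_mul_conjTranspose_mul_self]
  exact (posSemidef_conjTranspose_mul_self _).trace_nonneg

lemma mul_eq_zero_of_trace_mul_eq_zero (hA : A.PosSemidef) (hB : B.PosSemidef)
    (h : (A * B).trace = 0) : A * B = 0 := by
  obtain ⟨S, rfl⟩ := exists_eq_conjTranspose_mul_self hA
  obtain ⟨T, rfl⟩ := exists_eq_conjTranspose_mul_self hB
  rw [trace_conjTranspose_mul_self_mul_conjTranspose_mul_self,
    trace_conjTranspose_mul_self_eq_zero_iff] at h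
  calc Sᴴ * S * (Tᴴ * T) = Sᴴ * (S * Tᴴ) * T := by simp only [Matrix.mul_assoc]
    _ = 0 := by rw [h, Matrix.mul_zero, Matrix.zero_mul]

end PosSemidefTrace

/- Polarized Cayley–Hamilton: for invertible `M` this is the characteristic equation of `Q * M`,
multiplied on the right by `M⁻¹`. -/
lemma mul_mul_self_fin_two {R : Type*} [CommRing R] (Q M : Matrix (Fin 2) (Fin 2) R) :
    Q * M * Q = (Q * M).trace • Q - Q.det • M.adjugate := by
  ext i j
  fin_cases i <;> fin_cases j <;>
    simp only [Matrix.mul_apply, Fin.sum_univ_two, trace_fin_two, det_fin_two, adjugate_fin_two,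
      Matrix.sub_apply, Matrix.smul_apply, smul_eq_mul, of_apply, cons_val', cons_val_zero,
      cons_val_one, cons_val_fin_one, Fin.zero_eta, Fin.mk_one, Fin.isValue] <;>
    ring

section Proj

variable {d : ℕ} {O : Matrix (Fin d) (Fin d) ℂ}

lemma proj_zero_add_proj_one (O : Matrix (Fin d) (Fin d) ℂ) : Proj 0 O + Proj 1 O = 1 := by
  simp only [Proj, one_ne_zero, if_true, if_false]
  module

lemma Dichotomic.isStarProjection_proj (hO : Dichotomic O) (a : Fin 2) :
    IsStarProjection (Proj a O) where
  isIdempotentElem := by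
    fin_cases a <;>
    · simp only [IsIdempotentElem, Proj, Fin.zero_eta, Fin.mk_one, one_ne_zero, if_true, if_false,
        smul_mul_smul_comm, mul_add, add_mul, mul_one, one_mul, mul_neg, neg_mul, hO.2]
      module
  isSelfAdjoint := by
    have hstar : star O = O := hO.1
    fin_cases a <;> simp [IsSelfAdjoint, Proj, hstar]

/-- The observable `O = Π₀ - Π₁` of a two-outcome POVM `{Π₀, Π₁}`, i.e. `-I ≤ O ≤ I`; the
projective case is `O² = I`. -/
def DichotomicPOVM (O : Matrix (Fin d) (Fin d) ℂ) : Prop := ∀ a, (Proj a O).PosSemidef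

open scoped MatrixOrder in
lemma Dichotomic.dichotomicPOVM (hO : Dichotomic O) : DichotomicPOVM O :=
  fun a => (hO.isStarProjection_proj a).nonneg.posSemidef

end Proj

section QubitObservable

variable {Z σ : Matrix (Fin 2) (Fin 2) ℂ}

lemma det_proj_eq_zero (hZ : Dichotomic Z) (htr : Z.trace = 0) (a : Fin 2) :
    (Proj a Z).det = 0 := by
  have hsq : Z 0 0 * Z 0 0 + Z 0 1 * Z 1 0 = 1 := by
    simpa [Matrix.mul_apply] using congrFun₂ hZ.2 0 0
  rw [trace_fin_two] at htr
  fin_cases a <;>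
    simp only [Proj, Fin.zero_eta, Fin.mk_one, Fin.isValue, one_ne_zero, ↓reduceIte, det_fin_two,
      Matrix.smul_apply, Matrix.add_apply, Matrix.neg_apply, one_apply, smul_eq_mul,
      zero_ne_one] <;>
    grind

lemma eq_trace_smul_proj_zero_iff (hZ : Dichotomic Z) (htr : Z.trace = 0) (hσ : σ.PosSemidef) :
    σ = σ.trace • Proj 0 Z ↔ (Proj 1 Z * σ).trace = 0 := by
  have hproj := hZ.isStarProjection_proj 0
  have hcompl : Proj 1 Z = 1 - Proj 0 Z := eq_sub_of_add_eq' (proj_zero_add_proj_one Z)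
  constructor <;> intro h
  · rw [h, hcompl, mul_smul_comm, hproj.isIdempotentElem.one_sub_mul_self, smul_zero, trace_zero]
  · have hleft : Proj 0 Z * σ = σ := by
      have := mul_eq_zero_of_trace_mul_eq_zero (hZ.dichotomicPOVM 1) hσ h
      rw [hcompl, sub_mul, one_mul, sub_eq_zero] at this
      exact this.symm
    have hright : σ * Proj 0 Z = σ := by
      have := congrArg star hleft
      rwa [star_mul, hproj.isSelfAdjoint.star_eq, star_eq_conjTranspose, hσ.1.eq] at this
    calc σ = Proj 0 Z * σ * Proj 0 Z := by rw [hleft, hright]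
      _ = (Proj 0 Z * σ).trace • Proj 0 Z := by
        rw [mul_mul_self_fin_two, det_proj_eq_zero hZ htr, zero_smul, sub_zero]
      _ = σ.trace • Proj 0 Z := by rw [hleft]

lemma sum_eq_trace_smul_proj_zero_iff {ι : Type*} [Fintype ι] {c : ι → ℂ} (hc : ∀ i, 0 < c i)
    {σ : ι → Matrix (Fin 2) (Fin 2) ℂ} (hσ : ∀ i, (σ i).PosSemidef)
    (hZ : Dichotomic Z) (htr : Z.trace = 0) :
    ∑ i, c i • σ i = (∑ i, c i • σ i).trace • Proj 0 Z ↔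
      ∀ i, σ i = (σ i).trace • Proj 0 Z := by
  have hmix : (∑ i, c i • σ i).PosSemidef :=
    posSemidef_sum _ fun i _ => (hσ i).smul (hc i).le
  have hterm (i : ι) : 0 ≤ c i * (Proj 1 Z * σ i).trace :=
    mul_nonneg (hc i).le (trace_mul_nonneg (hZ.dichotomicPOVM 1) (hσ i))
  have htrace : (Proj 1 Z * ∑ i, c i • σ i).trace = ∑ i, c i * (Proj 1 Z * σ i).trace := by
    simp only [Matrix.mul_sum, mul_smul_comm, trace_sum, trace_smul, smul_eq_mul]
  rw [eq_trace_smul_proj_zero_iff hZ htr hmix, htrace,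
    Finset.sum_eq_zero_iff_of_nonneg fun i _ => hterm i]
  simp only [Finset.mem_univ, true_imp_iff, mul_eq_zero, (hc _).ne', false_or,
    eq_trace_smul_proj_zero_iff hZ htr (hσ _)]

lemma condProb_zero_eq_one_sub (Z : Matrix (Fin 2) (Fin 2) ℂ) (hpos : 0 < σ.trace.re) :
    condProb Z σ 0 = 1 - condProb Z σ 1 := by
  rw [eq_sub_iff_add_eq, condProb, condProb, ← add_div, ← Complex.add_re, ← trace_add, ← add_mul,
    proj_zero_add_proj_one, one_mul, div_self hpos.ne']

lemma condProb_zero_le_one (hZ : (Proj 1 Z).PosSemidef) (hσ : σ.PosSemidef)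
    (hpos : 0 < σ.trace.re) : condProb Z σ 0 ≤ 1 := by
  have hone : 0 ≤ condProb Z σ 1 :=
    div_nonneg (Complex.nonneg_iff.1 (trace_mul_nonneg hZ hσ)).1 hpos.le
  rw [condProb_zero_eq_one_sub Z hpos]
  linarith

lemma condProb_zero_eq_one_iff (hZ : Dichotomic Z) (htr : Z.trace = 0) (hσ : σ.PosSemidef)
    (hpos : 0 < σ.trace.re) : condProb Z σ 0 = 1 ↔ σ = σ.trace • Proj 0 Z := by
  have him := (Complex.nonneg_iff.1 (trace_mul_nonneg (hZ.dichotomicPOVM 1) hσ)).2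
  rw [condProb_zero_eq_one_sub Z hpos, sub_eq_self, condProb, div_eq_zero_iff,
    or_iff_left hpos.ne', eq_trace_smul_proj_zero_iff hZ htr hσ, Complex.ext_iff]
  exact (and_iff_left him.symm).symm

lemma dichotomic_sx : Dichotomic sx := by
  constructor
  · ext i j
    fin_cases i <;> fin_cases j <;> simp [sx]
  · simp [sx, one_fin_two]

lemma dichotomic_sy : Dichotomic sy := by
  constructor
  · ext i j
    fin_cases i <;> fin_cases j <;> simp [sy]
  · simp [sy, one_fin_two]

lemma trace_sx : sx.trace = 0 := by simp [sx]

lemma trace_sy : sy.trace = 0 := by simp [sy]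

end QubitObservable

section ConditionalState

variable {dA dB : ℕ} {ι : Type*} [Fintype ι]

lemma trAB_eq_sum_submatrix
    (M : Matrix (Fin dA × Fin dB × Fin 2) (Fin dA × Fin dB × Fin 2) ℂ) :
    trAB M = ∑ p : Fin dA × Fin dB,
      M.submatrix (fun i => (p.1, p.2, i)) (fun i => (p.1, p.2, i)) := by
  ext i j
  simp only [trAB, of_apply, Matrix.sum_apply, submatrix_apply, Fintype.sum_prod_type]

lemma trAB_posSemidef {M : Matrix (Fin dA × Fin dB × Fin 2) (Fin dA × Fin dB × Fin 2) ℂ}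
    (hM : M.PosSemidef) : (trAB M).PosSemidef := by
  rw [trAB_eq_sum_submatrix]
  exact posSemidef_sum _ fun _ _ => hM.submatrix _

lemma trAB_sum_smul (c : ι → ℂ)
    (M : ι → Matrix (Fin dA × Fin dB × Fin 2) (Fin dA × Fin dB × Fin 2) ℂ) :
    trAB (∑ i, c i • M i) = ∑ i, c i • trAB (M i) := by
  simp only [trAB_eq_sum_submatrix, Finset.smul_sum]
  rw [Finset.sum_comm]
  ext j k
  simp only [Matrix.sum_apply, submatrix_apply, Matrix.smul_apply]

lemma trAB_mul_comm (A : Matrix (Fin dA) (Fin dA) ℂ) (B : Matrix (Fin dB) (Fin dB) ℂ)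
    (M : Matrix (Fin dA × Fin dB × Fin 2) (Fin dA × Fin dB × Fin 2) ℂ) :
    trAB ((A ⊗ₖ (B ⊗ₖ 1)) * M) = trAB (M * (A ⊗ₖ (B ⊗ₖ 1))) := by
  ext i j
  have hleft : trAB ((A ⊗ₖ (B ⊗ₖ 1)) * M) i j = ∑ p : Fin dA × Fin dB, ∑ p' : Fin dA × Fin dB,
      A p.1 p'.1 * B p.2 p'.2 * M (p'.1, p'.2, i) (p.1, p.2, j) := by
    simp [trAB, Matrix.mul_apply, Fintype.sum_prod_type, Matrix.one_apply, mul_assoc]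
  have hright : trAB (M * (A ⊗ₖ (B ⊗ₖ 1))) i j = ∑ p' : Fin dA × Fin dB, ∑ p : Fin dA × Fin dB,
      A p.1 p'.1 * B p.2 p'.2 * M (p'.1, p'.2, i) (p.1, p.2, j) := by
    simp [trAB, Matrix.mul_apply, Fintype.sum_prod_type, Matrix.one_apply, mul_comm]
  rw [hleft, hright, Finset.sum_comm]

variable {ρ : Matrix (Fin dA × Fin dB × Fin 2) (Fin dA × Fin dB × Fin 2) ℂ}
  {X X0 X1 : Matrix (Fin dA) (Fin dA) ℂ} {Y Y0 Y1 : Matrix (Fin dB) (Fin dB) ℂ}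

lemma condState_posSemidef {a b : Fin 2} (hρ : ρ.PosSemidef) (hX : (Proj a X).PosSemidef)
    (hY : (Proj b Y).PosSemidef) : (condState ρ X Y a b).PosSemidef := by
  obtain ⟨S, hS⟩ := exists_eq_conjTranspose_mul_self hX
  obtain ⟨T, hT⟩ := exists_eq_conjTranspose_mul_self hY
  set K : Matrix (Fin dA × Fin dB × Fin 2) (Fin dA × Fin dB × Fin 2) ℂ := S ⊗ₖ (T ⊗ₖ 1) with hK
  have hKstar : Kᴴ = Sᴴ ⊗ₖ (Tᴴ ⊗ₖ 1) := by
    rw [hK, conjTranspose_kronecker, conjTranspose_kronecker, conjTranspose_one]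
  have hfactor : Proj a X ⊗ₖ (Proj b Y ⊗ₖ (1 : Matrix (Fin 2) (Fin 2) ℂ)) = Kᴴ * K := by
    rw [hKstar, hK, ← mul_kronecker_mul, ← mul_kronecker_mul, ← hS, ← hT, one_mul]
  have hsandwich : condState ρ X Y a b = trAB (K * ρ * Kᴴ) := by
    rw [condState, hfactor, Matrix.mul_assoc, hKstar, trAB_mul_comm]
  exact hsandwich ▸ trAB_posSemidef (hρ.mul_mul_conjTranspose_same K)

lemma condState_sum (c : ι → ℂ)
    (ρ : ι → Matrix (Fin dA × Fin dB × Fin 2) (Fin dA × Fin dB × Fin 2) ℂ)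
    (X : Matrix (Fin dA) (Fin dA) ℂ) (Y : Matrix (Fin dB) (Fin dB) ℂ) (a b : Fin 2) :
    condState (∑ i, c i • ρ i) X Y a b = ∑ i, c i • condState (ρ i) X Y a b := by
  simp only [condState, Matrix.mul_sum, mul_smul_comm, trAB_sum_smul]

/-- The four outcomes of Alice and Bob entering `CP` leave Charlie's qubit, up to normalization, in
the `+1` eigenstate of `σx` (first two) or of `σy` (last two): the perfect-steering condition. -/
def SteersToPauli (ρ : Matrix (Fin dA × Fin dB × Fin 2) (Fin dA × Fin dB × Fin 2) ℂ)
    (X0 X1 : Matrix (Fin dA) (Fin dA) ℂ) (Y0 Y1 : Matrix (Fin dB) (Fin dB) ℂ) : Prop :=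
  condState ρ X0 Y0 1 1 = (condState ρ X0 Y0 1 1).trace • Proj 0 sx ∧
  condState ρ X1 Y1 0 1 = (condState ρ X1 Y1 0 1).trace • Proj 0 sx ∧
  condState ρ X0 Y1 0 1 = (condState ρ X0 Y1 0 1).trace • Proj 0 sy ∧
  condState ρ X1 Y0 0 1 = (condState ρ X1 Y0 0 1).trace • Proj 0 sy

lemma CP_eq_four_iff_steersToPauli (hρ : ρ.PosSemidef)
    (hX0 : DichotomicPOVM X0) (hX1 : DichotomicPOVM X1)
    (hY0 : DichotomicPOVM Y0) (hY1 : DichotomicPOVM Y1) (hpos : PosEvents ρ X0 X1 Y0 Y1) :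
    CP ρ X0 X1 Y0 Y1 = 4 ↔ SteersToPauli ρ X0 X1 Y0 Y1 := by
  obtain ⟨p00, p11, p01, p10⟩ := hpos
  have s00 := condState_posSemidef hρ (hX0 1) (hY0 1)
  have s11 := condState_posSemidef hρ (hX1 0) (hY1 1)
  have s01 := condState_posSemidef hρ (hX0 0) (hY1 1)
  have s10 := condState_posSemidef hρ (hX1 0) (hY0 1)
  have l00 := condProb_zero_le_one (dichotomic_sx.dichotomicPOVM 1) s00 p00
  have l11 := condProb_zero_le_one (dichotomic_sx.dichotomicPOVM 1) s11 p11
  have l01 := condProb_zero_le_one (dichotomic_sy.dichotomicPOVM 1) s01 p01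
  have l10 := condProb_zero_le_one (dichotomic_sy.dichotomicPOVM 1) s10 p10
  rw [SteersToPauli, ← condProb_zero_eq_one_iff dichotomic_sx trace_sx s00 p00,
    ← condProb_zero_eq_one_iff dichotomic_sx trace_sx s11 p11,
    ← condProb_zero_eq_one_iff dichotomic_sy trace_sy s01 p01,
    ← condProb_zero_eq_one_iff dichotomic_sy trace_sy s10 p10, CP]
  constructor
  · intro h
    refine ⟨?_, ?_, ?_, ?_⟩ <;> linarith
  · rintro ⟨e00, e11, e01, e10⟩
    linarith

lemma steersToPauli_sum_iff {c : ι → ℂ} (hc : ∀ i, 0 < c i)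
    {ρ : ι → Matrix (Fin dA × Fin dB × Fin 2) (Fin dA × Fin dB × Fin 2) ℂ}
    (hρ : ∀ i, (ρ i).PosSemidef) (hX0 : DichotomicPOVM X0) (hX1 : DichotomicPOVM X1)
    (hY0 : DichotomicPOVM Y0) (hY1 : DichotomicPOVM Y1) :
    SteersToPauli (∑ i, c i • ρ i) X0 X1 Y0 Y1 ↔ ∀ i, SteersToPauli (ρ i) X0 X1 Y0 Y1 := by
  simp only [SteersToPauli, condState_sum, forall_and]
  rw [sum_eq_trace_smul_proj_zero_iff hc (fun i => condState_posSemidef (hρ i) (hX0 1) (hY0 1))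
      dichotomic_sx trace_sx,
    sum_eq_trace_smul_proj_zero_iff hc (fun i => condState_posSemidef (hρ i) (hX1 0) (hY1 1))
      dichotomic_sx trace_sx,
    sum_eq_trace_smul_proj_zero_iff hc (fun i => condState_posSemidef (hρ i) (hX0 0) (hY1 1))
      dichotomic_sy trace_sy,
    sum_eq_trace_smul_proj_zero_iff hc (fun i => condState_posSemidef (hρ i) (hX1 0) (hY0 1))
      dichotomic_sy trace_sy]

theorem stmt17_general {q : ι → ℝ}
    {ρi : ι → Matrix (Fin dA × Fin dB × Fin 2) (Fin dA × Fin dB × Fin 2) ℂ}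
    (hq : ∀ i, 0 < q i) (hρi : ∀ i, (ρi i).PosSemidef)
    (hX0 : DichotomicPOVM X0) (hX1 : DichotomicPOVM X1)
    (hY0 : DichotomicPOVM Y0) (hY1 : DichotomicPOVM Y1)
    (hpos : PosEvents (∑ i, (q i : ℂ) • ρi i) X0 X1 Y0 Y1)
    (hCP : CP (∑ i, (q i : ℂ) • ρi i) X0 X1 Y0 Y1 = 4) (i : ι) :
    SteersToPauli (ρi i) X0 X1 Y0 Y1 ∧
      (PosEvents (ρi i) X0 X1 Y0 Y1 → CP (ρi i) X0 X1 Y0 Y1 = 4) := by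
  have hc (i : ι) : (0 : ℂ) < q i := Complex.zero_lt_real.2 (hq i)
  have hmix : (∑ i, (q i : ℂ) • ρi i).PosSemidef :=
    posSemidef_sum _ fun i _ => (hρi i).smul (hc i).le
  have hsteer_mix := (CP_eq_four_iff_steersToPauli hmix hX0 hX1 hY0 hY1 hpos).1 hCP
  have hsteer := (steersToPauli_sum_iff hc hρi hX0 hX1 hY0 hY1).1 hsteer_mix i
  exact ⟨hsteer, (CP_eq_four_iff_steersToPauli (hρi i) hX0 hX1 hY0 hY1 · |>.2 hsteer)⟩

end ConditionalState

/-- if a convex mixture `ρ = Σᵢ qᵢ ρᵢ` of three-qubit density matrices attains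
`CP = 4`, then every component's conditional states are proportional to the corresponding Pauli
eigenprojectors; in particular every component with positive conditioning events also attains
`CP = 4` with the same settings. -/
theorem stmt17 (m : ℕ) (q : Fin m → ℝ)
    (ρi : Fin m → Matrix (Fin 2 × Fin 2 × Fin 2) (Fin 2 × Fin 2 × Fin 2) ℂ)
    (hq : ∀ i, 0 < q i) (hqs : (∑ i, q i) = 1)
    (hρi : ∀ i, (ρi i).PosSemidef ∧ (ρi i).trace = 1)
    (X0 X1 Y0 Y1 : Matrix (Fin 2) (Fin 2) ℂ)
    (hX0 : Dichotomic X0) (hX1 : Dichotomic X1) (hY0 : Dichotomic Y0) (hY1 : Dichotomic Y1)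
    (hpos : PosEvents (∑ i, (q i : ℂ) • ρi i) X0 X1 Y0 Y1)
    (hCP : CP (∑ i, (q i : ℂ) • ρi i) X0 X1 Y0 Y1 = 4) :
    ∀ i,
      (condState (ρi i) X0 Y0 1 1 = (condState (ρi i) X0 Y0 1 1).trace • Proj 0 sx ∧
       condState (ρi i) X1 Y1 0 1 = (condState (ρi i) X1 Y1 0 1).trace • Proj 0 sx ∧
       condState (ρi i) X0 Y1 0 1 = (condState (ρi i) X0 Y1 0 1).trace • Proj 0 sy ∧
       condState (ρi i) X1 Y0 0 1 = (condState (ρi i) X1 Y0 0 1).trace • Proj 0 sy) ∧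
      (PosEvents (ρi i) X0 X1 Y0 Y1 → CP (ρi i) X0 X1 Y0 Y1 = 4) := by
  exact stmt17_general hq (fun i => (hρi i).1) hX0.dichotomicPOVM hX1.dichotomicPOVM
    hY0.dichotomicPOVM hY1.dichotomicPOVM hpos hCP

end Paper
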